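/- arXiv:2507.18766 — 4 statements merged into one kernel-verified Lean document; each statement's English description precedes it below -/
import Mathlib

section
/- Let ρ : ℝ × (−T,T) → ℝ be jointly C¹, with ρ(·,t) a positive probability density for each t, and suppose |∂_t ρ(x,t)| and |x ∂_t ρ(x,t)| are dominated by integrable functions of x uniformly in t. Write h(x) = ∂_t ρ(x,t)|_{t=0}. Then for each fixed f ∈ (0,1), the Lorenz curve satisfies d/dt|_{t=0} ℒ_t(f) = ∫_{−∞}^{G_0(f)} y h(y) dy − G_0(f) ∫_{−∞}^{G_0(f)} h(y) dy. -/
open MeasureTheory Set Filter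

/-- A positive probability density on ℝ: continuous, everywhere positive,
integrating to 1, with finite first moment. -/
def IsPosDensity (ρ : ℝ → ℝ) : Prop :=
  Continuous ρ ∧ (∀ x, 0 < ρ x) ∧ (∫ x, ρ x) = 1 ∧
    MeasureTheory.Integrable (fun x => |x| * ρ x)

/-- The cumulative distribution function of a density. -/
noncomputable def cdfOf (ρ : ℝ → ℝ) (x : ℝ) : ℝ := ∫ y in Iic x, ρ y

/-!
With `g = G t₀` and `F t` the cumulative distribution function at time `t`,
`∫_{-∞}^{G t} y ρ(y,t) dy = ∫_{-∞}^g y ρ(y,t) dy + g (f - F t g) + ∫_g^{G t} (y - g) ρ(y,t) dy`.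
The first two terms involve only the fixed cut-off `g`, so they are differentiated under the
integral sign. The last is bounded by `|G t - g| * |F t₀ g - F t g| = o(1) * O(t - t₀)` and has
derivative zero, where `G t → g` because the strictly increasing limit `F t₀` of the increasing
functions `F t` takes the common level `f` at `g`.
-/

open scoped Topology
open Asymptotics

section OrderTopology

variable {ι α β : Type*} {l : Filter ι} [LinearOrder α] [TopologicalSpace α] [OrderTopology α]
  [LinearOrder β] [TopologicalSpace β] [OrderTopology β]

lemma tendsto_of_monotone_of_apply_eq {F : ι → α → β} {F₀ : α → β} {q : ι → α} {a : α}
    (hF : ∀ᶠ i in l, Monotone (F i)) (hF₀ : StrictMono F₀)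
    (hlim : ∀ x, Tendsto (fun i => F i x) l (𝓝 (F₀ x))) (hq : ∀ᶠ i in l, F i (q i) = F₀ a) :
    Tendsto q l (𝓝 a) := by
  refine tendsto_order.2 ⟨fun x hx => ?_, fun x hx => ?_⟩
  · filter_upwards [hF, hq, (hlim x).eventually_lt_const (hF₀ hx)] with i hmono heq hlt
    exact hmono.reflect_lt (heq ▸ hlt)
  · filter_upwards [hF, hq, (hlim x).eventually_const_lt (hF₀ hx)] with i hmono heq hlt
    exact hmono.reflect_lt (heq ▸ hlt)

end OrderTopology

section PartialFunction

variable {𝕜 E₁ E₂ E₃ : Type*} [NontriviallyNormedField 𝕜] [NormedAddCommGroup E₁] [NormedSpace 𝕜 E₁]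
  [NormedAddCommGroup E₂] [NormedSpace 𝕜 E₂] [NormedAddCommGroup E₃] [NormedSpace 𝕜 E₃]

lemma differentiable_apply_of_differentiable_prod {φ : E₁ → E₂ → E₃}
    (hφ : Differentiable 𝕜 fun p : E₁ × E₂ => φ p.1 p.2) (x : E₁) : Differentiable 𝕜 (φ x) :=
  hφ.comp ((differentiable_const x).prodMk differentiable_id)

end PartialFunction

section ParametricIntegral

variable {𝕜 α E : Type*} [MeasurableSpace α] {μ : Measure α} [NormedAddCommGroup E]
  {F : 𝕜 → α → E} {t₀ : 𝕜}

lemma aestronglyMeasurable_of_hasDerivAt [NontriviallyNormedField 𝕜] [NormedSpace 𝕜 E]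
    {F' : α → E} (hF : ∀ᶠ t in 𝓝 t₀, AEStronglyMeasurable (F t) μ)
    (hF' : ∀ᵐ x ∂μ, HasDerivAt (fun t => F t x) (F' x) t₀) : AEStronglyMeasurable F' μ := by
  obtain ⟨u, hu, hFu⟩ := exists_seq_forall_of_frequently (hF.filter_mono nhdsWithin_le_nhds :
    ∀ᶠ t in 𝓝[≠] t₀, AEStronglyMeasurable (F t) μ).frequently
  refine aestronglyMeasurable_of_tendsto_ae atTop
    (f := fun n x => slope (fun t => F t x) t₀ (u n)) (fun n => ?_) ?_
  · exact ((hFu n).sub hF.self_of_nhds).const_smul (u n - t₀)⁻¹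
  · filter_upwards [hF'] with x hx using hx.tendsto_slope.comp hu

lemma hasDerivAt_integral_of_dominated_of_hasDerivAt [RCLike 𝕜] [NormedSpace 𝕜 E]
    [NormedSpace ℝ E] {F' : 𝕜 → α → E} {bound : α → ℝ} {s : Set 𝕜} (hs : s ∈ 𝓝 t₀)
    (hmeas : ∀ᶠ t in 𝓝 t₀, AEStronglyMeasurable (F t) μ) (hint : Integrable (F t₀) μ)
    (hF' : ∀ᵐ x ∂μ, ∀ t ∈ s, HasDerivAt (fun t => F t x) (F' t x) t)
    (hdom : ∀ᵐ x ∂μ, ∀ t ∈ s, ‖F' t x‖ ≤ bound x) (hbound : Integrable bound μ) :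
    HasDerivAt (fun t => ∫ x, F t x ∂μ) (∫ x, F' t₀ x ∂μ) t₀ :=
  (hasDerivAt_integral_of_dominated_loc_of_deriv_le hs hmeas hint
    (aestronglyMeasurable_of_hasDerivAt hmeas (hF'.mono fun _ hx => hx t₀ (mem_of_mem_nhds hs)))
    hdom hbound hF').2

end ParametricIntegral

section CumulativeIntegral

variable {μ : Measure ℝ} {ρ : ℝ → ℝ}

lemma monotone_setIntegral_Iic (hρ : Integrable ρ μ) (hnonneg : ∀ x, 0 ≤ ρ x) :
    Monotone fun a => ∫ x in Iic a, ρ x ∂μ := fun _ _ hab =>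
  setIntegral_mono_set hρ.integrableOn (ae_of_all _ hnonneg) (Iic_subset_Iic.2 hab).eventuallyLE

lemma strictMono_setIntegral_Iic [μ.IsOpenPosMeasure] (hρ : Integrable ρ μ)
    (hpos : ∀ x, 0 < ρ x) : StrictMono fun a => ∫ x in Iic a, ρ x ∂μ := by
  intro a b hab
  rw [← sub_pos, intervalIntegral.integral_Iic_sub_Iic hρ.integrableOn hρ.integrableOn,
    intervalIntegral.integral_pos_iff_support_of_nonneg_ae (ae_of_all _ fun x => (hpos x).le)
      hρ.intervalIntegrable]
  have hsupp : Function.support ρ = univ := Function.support_eq_univ fun x => (hpos x).ne'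
  rw [hsupp, univ_inter]
  exact ⟨hab, (Measure.measure_Ioo_pos μ |>.2 hab).trans_le (measure_mono Ioo_subset_Ioc_self)⟩

lemma setIntegral_Iic_id_mul_eq (hρ : Integrable ρ μ) (hmoment : Integrable (fun x => x * ρ x) μ)
    (a b : ℝ) :
    ∫ x in Iic b, x * ρ x ∂μ = (∫ x in Iic a, x * ρ x ∂μ)
      + a * ((∫ x in Iic b, ρ x ∂μ) - ∫ x in Iic a, ρ x ∂μ) + ∫ x in a..b, (x - a) * ρ x ∂μ := by
  have hsplit : ∫ x in a..b, (x - a) * ρ x ∂μ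
      = (∫ x in a..b, x * ρ x ∂μ) - a * ∫ x in a..b, ρ x ∂μ := by
    simp only [sub_mul]
    rw [intervalIntegral.integral_sub hmoment.intervalIntegrable
      (hρ.const_mul a).intervalIntegrable, intervalIntegral.integral_const_mul]
  rw [hsplit, ← intervalIntegral.integral_Iic_sub_Iic hρ.integrableOn hρ.integrableOn,
    ← intervalIntegral.integral_Iic_sub_Iic hmoment.integrableOn hmoment.integrableOn]
  ring

lemma norm_intervalIntegral_sub_mul_le {a b : ℝ} (hρ : IntervalIntegrable ρ μ a b)
    (hnonneg : ∀ x, 0 ≤ ρ x) :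
    ‖∫ x in a..b, (x - a) * ρ x ∂μ‖ ≤ ‖b - a‖ * ‖∫ x in a..b, ρ x ∂μ‖ := by
  have hpointwise : ∀ x ∈ uIoc a b, ‖(x - a) * ρ x‖ ≤ ‖b - a‖ * ρ x := fun x hx => by
    rw [norm_mul, Real.norm_of_nonneg (hnonneg x)]
    exact mul_le_mul_of_nonneg_right (abs_sub_left_of_mem_uIcc (uIoc_subset_uIcc hx)) (hnonneg x)
  simpa only [intervalIntegral.integral_const_mul, ← Real.norm_eq_abs, norm_mul, norm_norm] using
    intervalIntegral.norm_integral_le_abs_of_norm_le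
      (ae_restrict_of_forall_mem measurableSet_uIoc hpointwise) (hρ.const_mul ‖b - a‖)

lemma isLittleO_intervalIntegral_sub_mul {ι : Type*} {l : Filter ι} {ρ : ι → ℝ → ℝ} {q : ι → ℝ}
    {a : ℝ} (hq : Tendsto q l (𝓝 a)) (hρ : ∀ᶠ i in l, Integrable (ρ i) μ)
    (hnonneg : ∀ᶠ i in l, ∀ x, 0 ≤ ρ i x) :
    (fun i => ∫ x in a..q i, (x - a) * ρ i x ∂μ) =o[l] fun i => ∫ x in a..q i, ρ i x ∂μ := by
  have hsmall : (fun i => q i - a) =o[l] fun _ => (1 : ℝ) :=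
    (isLittleO_one_iff ℝ).2 (tendsto_sub_nhds_zero_iff.2 hq)
  have hle : (fun i => ∫ x in a..q i, (x - a) * ρ i x ∂μ)
      =O[l] fun i => (q i - a) * ∫ x in a..q i, ρ i x ∂μ := by
    refine IsBigO.of_bound' ?_
    filter_upwards [hρ, hnonneg] with i hint hpos
    exact (norm_intervalIntegral_sub_mul_le hint.intervalIntegrable hpos).trans_eq
      (norm_mul _ _).symm
  simpa only [one_mul] using hle.trans_isLittleO (hsmall.mul_isBigO (isBigO_refl _ l))

end CumulativeIntegral

section DensityFamily

variable {μ : Measure ℝ} {ρ : ℝ → ℝ → ℝ} {G : ℝ → ℝ} {s : Set ℝ} {t₀ f : ℝ}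

lemma tendsto_quantile [μ.IsOpenPosMeasure] (hs : s ∈ 𝓝 t₀)
    (hρ : ∀ t ∈ s, Integrable (fun x => ρ x t) μ) (hnonneg : ∀ t ∈ s, ∀ x, 0 ≤ ρ x t)
    (hpos : ∀ x, 0 < ρ x t₀)
    (hcont : ∀ a, ContinuousAt (fun t => ∫ x in Iic a, ρ x t ∂μ) t₀)
    (hG : ∀ t ∈ s, ∫ x in Iic (G t), ρ x t ∂μ = f) : Tendsto G (𝓝 t₀) (𝓝 (G t₀)) := by
  have ht₀ : t₀ ∈ s := mem_of_mem_nhds hs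
  refine tendsto_of_monotone_of_apply_eq (F := fun t a => ∫ x in Iic a, ρ x t ∂μ) ?_
    (strictMono_setIntegral_Iic (hρ t₀ ht₀) hpos) hcont ?_
  · filter_upwards [hs] with t ht using monotone_setIntegral_Iic (hρ t ht) (hnonneg t ht)
  · filter_upwards [hs] with t ht using (hG t ht).trans (hG t₀ ht₀).symm

lemma hasDerivAt_intervalIntegral_sub_mul_zero {c : ℝ} (hs : s ∈ 𝓝 t₀)
    (hρ : ∀ t ∈ s, Integrable (fun x => ρ x t) μ) (hnonneg : ∀ t ∈ s, ∀ x, 0 ≤ ρ x t)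
    (hG : ∀ t ∈ s, ∫ x in Iic (G t), ρ x t ∂μ = f) (hGcont : Tendsto G (𝓝 t₀) (𝓝 (G t₀)))
    (hcdf : HasDerivAt (fun t => ∫ x in Iic (G t₀), ρ x t ∂μ) c t₀) :
    HasDerivAt (fun t => ∫ x in G t₀..G t, (x - G t₀) * ρ x t ∂μ) 0 t₀ := by
  have hmass : (fun t => ∫ x in G t₀..G t, ρ x t ∂μ) =O[𝓝 t₀] fun t => t - t₀ := by
    refine hcdf.isBigO_sub.neg_left.congr' ?_ EventuallyEq.rfl
    filter_upwards [hs] with t ht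
    rw [← intervalIntegral.integral_Iic_sub_Iic (hρ t ht).integrableOn (hρ t ht).integrableOn,
      hG t ht, hG t₀ (mem_of_mem_nhds hs), neg_sub]
  have hlittle := (isLittleO_intervalIntegral_sub_mul hGcont (mem_of_superset hs hρ)
    (mem_of_superset hs hnonneg)).trans_isBigO hmass
  simpa only [hasDerivAt_iff_isLittleO, intervalIntegral.integral_same, smul_zero, sub_zero]
    using hlittle

theorem stmt1_general [μ.IsOpenPosMeasure] {ρ' : ℝ → ℝ → ℝ} {bound₁ bound₂ : ℝ → ℝ}
    (hs : s ∈ 𝓝 t₀) (hρ : ∀ t ∈ s, Integrable (fun x => ρ x t) μ)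
    (hmoment : ∀ t ∈ s, Integrable (fun x => x * ρ x t) μ) (hnonneg : ∀ t ∈ s, ∀ x, 0 ≤ ρ x t)
    (hpos : ∀ x, 0 < ρ x t₀) (hρ' : ∀ t ∈ s, ∀ x, HasDerivAt (ρ x) (ρ' x t) t)
    (hbound₁ : Integrable bound₁ μ) (hbound₂ : Integrable bound₂ μ)
    (hdom₁ : ∀ t ∈ s, ∀ x, |ρ' x t| ≤ bound₁ x) (hdom₂ : ∀ t ∈ s, ∀ x, |x * ρ' x t| ≤ bound₂ x)
    (hG : ∀ t ∈ s, ∫ x in Iic (G t), ρ x t ∂μ = f) :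
    HasDerivAt (fun t => ∫ x in Iic (G t), x * ρ x t ∂μ)
      ((∫ x in Iic (G t₀), x * ρ' x t₀ ∂μ) - G t₀ * ∫ x in Iic (G t₀), ρ' x t₀ ∂μ) t₀ := by
  have ht₀ : t₀ ∈ s := mem_of_mem_nhds hs
  have hcdf (a : ℝ) : HasDerivAt (fun t => ∫ x in Iic a, ρ x t ∂μ)
      (∫ x in Iic a, ρ' x t₀ ∂μ) t₀ :=
    hasDerivAt_integral_of_dominated_of_hasDerivAt (F' := fun t x => ρ' x t) hs
      (mem_of_superset hs fun t ht => (hρ t ht).1.restrict) (hρ t₀ ht₀).integrableOn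
      (ae_of_all _ fun x t ht => hρ' t ht x)
      (ae_of_all _ fun x t ht => hdom₁ t ht x) hbound₁.integrableOn
  have hpartial : HasDerivAt (fun t => ∫ x in Iic (G t₀), x * ρ x t ∂μ)
      (∫ x in Iic (G t₀), x * ρ' x t₀ ∂μ) t₀ :=
    hasDerivAt_integral_of_dominated_of_hasDerivAt (F' := fun t x => x * ρ' x t) hs
      (mem_of_superset hs fun t ht => (hmoment t ht).1.restrict) (hmoment t₀ ht₀).integrableOn
      (ae_of_all _ fun x t ht => (hρ' t ht x).const_mul x)
      (ae_of_all _ fun x t ht => hdom₂ t ht x) hbound₂.integrableOn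
  have hrem := hasDerivAt_intervalIntegral_sub_mul_zero hs hρ hnonneg hG
    (tendsto_quantile hs hρ hnonneg hpos (fun a => (hcdf a).continuousAt) hG) (hcdf (G t₀))
  have hsum := (hpartial.add (((hcdf (G t₀)).const_sub f).const_mul (G t₀))).add hrem
  rw [mul_neg, ← sub_eq_add_neg, add_zero] at hsum
  refine hsum.congr_of_eventuallyEq ?_
  filter_upwards [hs] with t ht
  rw [setIntegral_Iic_id_mul_eq (hρ t ht) (hmoment t ht) (G t₀) (G t), hG t ht]
  rfl

end DensityFamily

namespace IsPosDensity

variable {ρ : ℝ → ℝ}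

lemma integrable (hρ : IsPosDensity ρ) : Integrable ρ :=
  .of_integral_ne_zero (hρ.2.2.1.trans_ne one_ne_zero)

lemma integrable_id_mul (hρ : IsPosDensity ρ) : Integrable fun x => x * ρ x :=
  hρ.2.2.2.mono (continuous_id.mul hρ.1).aestronglyMeasurable
    (ae_of_all _ fun x => by simp)

end IsPosDensity

theorem stmt1 (T : ℝ) (hT : 0 < T) (ρ : ℝ → ℝ → ℝ)
    (hC1 : ContDiff ℝ 1 (fun p : ℝ × ℝ => ρ p.1 p.2))
    (hdens : ∀ t ∈ Ioo (-T) T, IsPosDensity (fun x => ρ x t))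
    (bound₁ bound₂ : ℝ → ℝ)
    (hbound₁ : MeasureTheory.Integrable bound₁)
    (hbound₂ : MeasureTheory.Integrable bound₂)
    (hdom₁ : ∀ t ∈ Ioo (-T) T, ∀ x : ℝ, |deriv (fun s => ρ x s) t| ≤ bound₁ x)
    (hdom₂ : ∀ t ∈ Ioo (-T) T, ∀ x : ℝ, |x * deriv (fun s => ρ x s) t| ≤ bound₂ x)
    (G : ℝ → ℝ → ℝ)
    (hG : ∀ t ∈ Ioo (-T) T, ∀ f ∈ Ioo (0:ℝ) 1, cdfOf (fun x => ρ x t) (G t f) = f)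
    (h : ℝ → ℝ) (hh : ∀ x, h x = deriv (fun s => ρ x s) 0)
    (f : ℝ) (hf : f ∈ Ioo (0:ℝ) 1) :
    HasDerivAt (fun t => ∫ y in Iic (G t f), y * ρ y t)
      ((∫ y in Iic (G 0 f), y * h y) - G 0 f * ∫ y in Iic (G 0 f), h y) 0 := by
  obtain rfl : h = fun x => deriv (ρ x) 0 := funext hh
  have h0 : (0 : ℝ) ∈ Ioo (-T) T := ⟨neg_lt_zero.2 hT, hT⟩
  have hdiff := differentiable_apply_of_differentiable_prod (hC1.differentiable one_ne_zero)
  exact stmt1_general (Ioo_mem_nhds h0.1 h0.2) (fun t ht => (hdens t ht).integrable)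
    (fun t ht => (hdens t ht).integrable_id_mul) (fun t ht x => ((hdens t ht).2.1 x).le)
    (hdens 0 h0).2.1 (fun t _ x => (hdiff x t).hasDerivAt)
    hbound₁ hbound₂ hdom₁ hdom₂ (fun t ht => hG t ht f hf)
end

section
/- Let ρ be a positive probability density on ℝ with cdf C and inverse cdf G, and let φ : [0,1] → ℝ be continuous and bounded. Then for every f ∈ (0,1), ∫_{−∞}^{G(f)} ( ∫_{−∞}^y ρ(u) φ(C(u)) du ) dy = ∫_0^f ( 1 / ρ(G(g)) ) ( ∫_0^g φ(l) dl ) dg; that is, the two expressions for the transformed Fréchet derivative in the spatial variable x and in the cdf variable f coincide. -/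
open MeasureTheory Set Filter

open scoped Topology

/-!
For a continuous positive integrable `ρ`, the distribution function `C` is an increasing
`C¹` bijection of `(-∞, y]` onto `(0, C y]` with derivative `ρ`, so substituting `l = C u` turns
integrals of `ρ u • F (C u)` over `(-∞, y]` into integrals of `F` over `(0, C y]`. Applied to `φ`,
this evaluates the inner integral. Applied to `g ↦ (1 / ρ (G g)) • ∫ l in 0..g, φ l`, it
transforms the outer one: the Jacobian `ρ` cancels the factor `1 / ρ (G g)` because `G` inverts `C`.
-/

section StrictMono

variable {α β : Type*} [LinearOrder α] [TopologicalSpace β] [PartialOrder β]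
  [OrderClosedTopology β] {f : α → β} {a : β}

theorem lt_of_strictMono_of_tendsto_atBot [NoMinOrder α] (hf : StrictMono f)
    (hlim : Tendsto f atBot (𝓝 a)) (x : α) : a < f x := by
  obtain ⟨z, hzx⟩ := exists_lt x
  have : Nonempty α := ⟨x⟩
  exact (hf.monotone.le_of_tendsto hlim z).trans_lt (hf hzx)

theorem lt_of_strictMono_of_tendsto_atTop [NoMaxOrder α] (hf : StrictMono f)
    (hlim : Tendsto f atTop (𝓝 a)) (x : α) : f x < a :=
  lt_of_strictMono_of_tendsto_atBot hf.dual hlim (OrderDual.toDual x)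

end StrictMono

theorem image_Iic_of_strictMono_of_tendsto_atBot {α β : Type*}
    [ConditionallyCompleteLinearOrder α] [TopologicalSpace α] [OrderTopology α] [DenselyOrdered α]
    [NoMinOrder α] [LinearOrder β] [TopologicalSpace β] [OrderClosedTopology β] {f : α → β} {a : β}
    (hf : StrictMono f) (hcont : Continuous f) (hlim : Tendsto f atBot (𝓝 a)) (y : α) :
    f '' Iic y = Ioc a (f y) := by
  have : Nonempty α := ⟨y⟩
  refine Subset.antisymm ?_ (isPreconnected_Iic.intermediate_value_Ioc self_mem_Iic
    (le_principal_iff.mpr (Iic_mem_atBot y)) hcont.continuousOn hlim)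
  rintro _ ⟨x, hxy, rfl⟩
  exact ⟨lt_of_strictMono_of_tendsto_atBot hf hlim x, hf.monotone hxy⟩

section Cdf

variable {ρ : ℝ → ℝ}

theorem cdfOf_sub_cdfOf (hρ : Integrable ρ) (a b : ℝ) :
    cdfOf ρ b - cdfOf ρ a = ∫ x in a..b, ρ x :=
  intervalIntegral.integral_Iic_sub_Iic hρ.integrableOn hρ.integrableOn

theorem tendsto_cdfOf_atBot (ρ : ℝ → ℝ) : Tendsto (cdfOf ρ) atBot (𝓝 0) :=
  tendsto_integral_Iic_zero tendsto_id

theorem tendsto_cdfOf_atTop (hρ : Integrable ρ) : Tendsto (cdfOf ρ) atTop (𝓝 (∫ x, ρ x)) :=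
  (aecover_Iic tendsto_id).integral_tendsto_of_countably_generated hρ

theorem hasDerivAt_cdfOf (hρ : Integrable ρ) {x : ℝ} (hx : ContinuousAt ρ x) :
    HasDerivAt (cdfOf ρ) (ρ x) x := by
  have hcdf : cdfOf ρ = fun y ↦ cdfOf ρ 0 + ∫ t in (0 : ℝ)..y, ρ t := by
    funext y
    rw [← cdfOf_sub_cdfOf hρ, add_sub_cancel]
  rw [hcdf]
  exact (intervalIntegral.integral_hasDerivAt_right hρ.intervalIntegrable
    hρ.aestronglyMeasurable.stronglyMeasurableAtFilter hx).const_add _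

theorem strictMono_cdfOf (hρ : Integrable ρ) (hpos : ∀ x, 0 < ρ x) : StrictMono (cdfOf ρ) := by
  intro a b hab
  rw [← sub_pos, cdfOf_sub_cdfOf hρ]
  exact intervalIntegral.intervalIntegral_pos_of_pos hρ.intervalIntegrable hpos hab

theorem cdfOf_mem_Ioo (hρ : Integrable ρ) (hpos : ∀ x, 0 < ρ x) (x : ℝ) :
    cdfOf ρ x ∈ Ioo 0 (∫ x, ρ x) :=
  ⟨lt_of_strictMono_of_tendsto_atBot (strictMono_cdfOf hρ hpos) (tendsto_cdfOf_atBot ρ) x,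
    lt_of_strictMono_of_tendsto_atTop (strictMono_cdfOf hρ hpos) (tendsto_cdfOf_atTop hρ) x⟩

theorem leftInverse_cdfOf_of_rightInvOn (hρ : Integrable ρ) (hpos : ∀ x, 0 < ρ x) {G : ℝ → ℝ}
    (hG : RightInvOn G (cdfOf ρ) (Ioo 0 (∫ x, ρ x))) : Function.LeftInverse G (cdfOf ρ) :=
  fun x ↦ (strictMono_cdfOf hρ hpos).injective (hG (cdfOf_mem_Ioo hρ hpos x))

variable {E : Type*} [NormedAddCommGroup E] [NormedSpace ℝ E]

theorem setIntegral_Iic_smul_comp_cdfOf (hρ : Integrable ρ) (hcont : Continuous ρ)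
    (hpos : ∀ x, 0 < ρ x) (F : ℝ → E) (y : ℝ) :
    ∫ u in Iic y, ρ u • F (cdfOf ρ u) = ∫ l in (0 : ℝ)..cdfOf ρ y, F l := by
  have hderiv (x : ℝ) : HasDerivAt (cdfOf ρ) (ρ x) x := hasDerivAt_cdfOf hρ hcont.continuousAt
  have hmono := strictMono_cdfOf hρ hpos
  have himage : cdfOf ρ '' Iic y = Ioc 0 (cdfOf ρ y) :=
    image_Iic_of_strictMono_of_tendsto_atBot hmono
      (continuous_iff_continuousAt.mpr fun x ↦ (hderiv x).continuousAt) (tendsto_cdfOf_atBot ρ) y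
  rw [intervalIntegral.integral_of_le (cdfOf_mem_Ioo hρ hpos y).1.le, ← himage,
    integral_image_eq_integral_deriv_smul_of_monotoneOn measurableSet_Iic
      (fun x _ ↦ (hderiv x).hasDerivWithinAt) (hmono.monotone.monotoneOn _)]

theorem stmt3_general (hρ : Integrable ρ) (hcont : Continuous ρ) (hpos : ∀ x, 0 < ρ x) {G : ℝ → ℝ}
    (hG : RightInvOn G (cdfOf ρ) (Ioo 0 (∫ x, ρ x))) (φ : ℝ → E) {f : ℝ}
    (hf : f ∈ Ioo 0 (∫ x, ρ x)) :
    ∫ y in Iic (G f), ∫ u in Iic y, ρ u • φ (cdfOf ρ u) =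
      ∫ g in (0 : ℝ)..f, (1 / ρ (G g)) • ∫ l in (0 : ℝ)..g, φ l := by
  have hGC := leftInverse_cdfOf_of_rightInvOn hρ hpos hG
  calc ∫ y in Iic (G f), ∫ u in Iic y, ρ u • φ (cdfOf ρ u)
    _ = ∫ y in Iic (G f), ∫ l in (0 : ℝ)..cdfOf ρ y, φ l := by
      simp only [setIntegral_Iic_smul_comp_cdfOf hρ hcont hpos]
    _ = ∫ y in Iic (G f),
          ρ y • (1 / ρ (G (cdfOf ρ y))) • ∫ l in (0 : ℝ)..cdfOf ρ y, φ l := by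
      simp only [hGC _, one_div, smul_inv_smul₀ (hpos _).ne']
    _ = ∫ g in (0 : ℝ)..cdfOf ρ (G f), (1 / ρ (G g)) • ∫ l in (0 : ℝ)..g, φ l :=
      setIntegral_Iic_smul_comp_cdfOf hρ hcont hpos
        (fun g ↦ (1 / ρ (G g)) • ∫ l in (0 : ℝ)..g, φ l) (G f)
    _ = ∫ g in (0 : ℝ)..f, (1 / ρ (G g)) • ∫ l in (0 : ℝ)..g, φ l := by rw [hG hf]

end Cdf

theorem stmt3 (ρ : ℝ → ℝ) (hρ : IsPosDensity ρ)
    (G : ℝ → ℝ) (hG : ∀ f ∈ Ioo (0:ℝ) 1, cdfOf ρ (G f) = f)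
    (φ : ℝ → ℝ) (hφc : ContinuousOn φ (Icc 0 1))
    (hφb : ∃ Cb : ℝ, ∀ f ∈ Icc (0:ℝ) 1, |φ f| ≤ Cb)
    (f : ℝ) (hf : f ∈ Ioo (0:ℝ) 1) :
    (∫ y in Iic (G f), ∫ u in Iic y, ρ u * φ (cdfOf ρ u))
      = ∫ g in (0:ℝ)..f, (1 / ρ (G g)) * ∫ l in (0:ℝ)..g, φ l := by
  obtain ⟨hcont, hpos, hmass, -⟩ := hρ
  exact stmt3_general (integrable_of_integral_eq_one hmass) hcont hpos (hmass.symm ▸ hG) φ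
    (hmass.symm ▸ hf)
end

section
/- Let ρ : ℝ × (0,T) → ℝ be jointly smooth with ρ(·,t) a positive probability density for each t, let φ : [0,1] × (0,T) → ℝ be continuous, and let ψ : ℝ × (0,T) → ℝ be smooth and satisfy, for all f ∈ (0,1) and t, ψ(G_t(f),t) = − ∫_0^f ( 1/ρ(G_t(g),t) ) ( ∫_0^g φ(l,t) dl ) dg. Suppose ρ satisfies the continuity equation ∂_t ρ(x,t) = − ∂_x ( ρ(x,t) ∂_x ψ(x,t) ), and that ρ ∂_x ψ → 0 and x ρ ∂_x ψ → 0 as x → ±∞ for each t. Then the Lorenz curve of ρ(·,t) satisfies ∂_t ℒ_t(f) = − ∫_0^f ∫_0^g φ(l,t) dl dg for all f ∈ (0,1) and t. -/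
open MeasureTheory Set Filter

/-!
Write `Q(g, t) = ∫₀ᵍ φ(l, t) dl`. Changing variables `g = C_t(y)` in the relation between `ψ` and
`φ` gives `∂ₓψ(x, t) = -Q(C_t(x), t)`. The continuity equation transports the cdf by its flux,
`∂ₜC_t(x) = -ρ ∂ₓψ`, so differentiating `C_t(G_t(g)) = g` implicitly shows that each quantile moves
with the velocity field: `∂ₜG_t(g) = ∂ₓψ(G_t(g), t) = -Q(g, t)`. Finally `ℒ_t(f) = ∫₀ᶠ G_t(g) dg`,
and one differentiates under the integral sign.

The flux equation for the cdf holds a priori up to a constant in space; that constant vanishes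
because a finite first moment makes cdfs integrable near `-∞`.
-/

open scoped Topology

/-! ### Distribution functions and quantiles of a positive density -/

theorem hasDerivAt_integral_Iic {E : Type*} [NormedAddCommGroup E] [NormedSpace ℝ E]
    [CompleteSpace E] {f : ℝ → E} (hf : Continuous f) (hint : ∀ x, IntegrableOn f (Iic x))
    (x : ℝ) : HasDerivAt (fun u => ∫ y in Iic u, f y) (f x) x := by
  refine ((hf.integral_hasStrictDerivAt 0 x).hasDerivAt.const_add
    (∫ y in Iic 0, f y)).congr_of_eventuallyEq (.of_forall fun u => ?_)
  beta_reduce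
  rw [← intervalIntegral.integral_Iic_sub_Iic (hint 0) (hint u), add_sub_cancel]

namespace IsPosDensity

variable {r : ℝ → ℝ}

theorem integrable_s6 (h : IsPosDensity r) : Integrable r :=
  .of_integral_ne_zero (h.2.2.1 ▸ one_ne_zero)

theorem integrable_id_mul_s6 (h : IsPosDensity r) : Integrable (fun y => y * r y) :=
  h.2.2.2.mono (continuous_id.mul h.1).aestronglyMeasurable (.of_forall fun y => by simp)

theorem hasDerivAt_cdfOf (h : IsPosDensity r) (x : ℝ) : HasDerivAt (cdfOf r) (r x) x :=
  hasDerivAt_integral_Iic h.1 (fun _ => h.integrable_s6.integrableOn) x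

theorem continuous_cdfOf (h : IsPosDensity r) : Continuous (cdfOf r) :=
  continuous_iff_continuousAt.2 fun x => (h.hasDerivAt_cdfOf x).continuousAt

theorem strictMono_cdfOf (h : IsPosDensity r) : StrictMono (cdfOf r) :=
  strictMono_of_deriv_pos fun x => (h.hasDerivAt_cdfOf x).deriv ▸ h.2.1 x

theorem cdfOf_mem_Ioo (h : IsPosDensity r) (x : ℝ) : cdfOf r x ∈ Ioo 0 1 := by
  have nonneg (y : ℝ) : 0 ≤ cdfOf r y := integral_nonneg fun z => (h.2.1 z).le
  have le_one (y : ℝ) : cdfOf r y ≤ 1 :=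
    h.2.2.1 ▸ setIntegral_le_integral h.integrable_s6 (.of_forall fun z => (h.2.1 z).le)
  exact ⟨(nonneg _).trans_lt (h.strictMono_cdfOf (sub_one_lt x)),
    (h.strictMono_cdfOf (lt_add_one x)).trans_le (le_one _)⟩

theorem image_cdfOf_Iio (h : IsPosDensity r) (x : ℝ) :
    cdfOf r '' Iio x = Ioo 0 (cdfOf r x) := by
  refine Subset.antisymm ?_ fun f ⟨hf0, hfx⟩ => ?_
  · rintro _ ⟨y, hy, rfl⟩
    exact ⟨(h.cdfOf_mem_Ioo y).1, h.strictMono_cdfOf hy⟩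
  · have tendsto_zero : Tendsto (cdfOf r) atBot (𝓝 0) := tendsto_integral_Iic_zero tendsto_id
    obtain ⟨z, hz⟩ := (tendsto_zero.eventually_lt_const hf0).exists
    obtain ⟨y, rfl⟩ := mem_range_of_exists_le_of_exists_ge h.continuous_cdfOf ⟨z, hz.le⟩ ⟨x, hfx.le⟩
    exact ⟨y, h.strictMono_cdfOf.lt_iff_lt.1 hfx, rfl⟩

theorem integrableOn_cdfOf_Iic (h : IsPosDensity r) (x : ℝ) : IntegrableOn (cdfOf r) (Iic x) := by
  -- `H` is the primitive of the cdf obtained by integrating `1 * cdfOf r` by parts.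
  let H (y : ℝ) : ℝ := y * cdfOf r y - ∫ z in Iic y, z * r z
  have H_deriv (y : ℝ) : HasDerivAt H (cdfOf r y) y := by
    have moment_deriv : HasDerivAt (fun u => ∫ z in Iic u, z * r z) (y * r y) y :=
      hasDerivAt_integral_Iic (continuous_id.mul h.1)
        (fun _ => h.integrable_id_mul_s6.integrableOn) y
    simpa only [one_mul, add_sub_cancel_right] using
      ((hasDerivAt_id' y).fun_mul (h.hasDerivAt_cdfOf y)).fun_sub moment_deriv
  have H_nonneg (y : ℝ) : 0 ≤ H y := by
    simp only [H, cdfOf]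
    rw [← integral_const_mul, sub_nonneg]
    exact setIntegral_mono_on h.integrable_id_mul_s6.integrableOn
      (h.integrable_s6.const_mul y).integrableOn measurableSet_Iic
      fun z hz => mul_le_mul_of_nonneg_right hz (h.2.1 z).le
  refine integrableOn_Iic_of_intervalIntegral_norm_bounded (H x) x
    (fun _ => h.continuous_cdfOf.integrableOn_Ioc) tendsto_id (.of_forall fun y => ?_)
  calc ∫ z in y..x, ‖cdfOf r z‖ = ∫ z in y..x, cdfOf r z := by
        simp only [Real.norm_of_nonneg (h.cdfOf_mem_Ioo _).1.le]
    _ = H x - H y := intervalIntegral.integral_eq_sub_of_hasDerivAt (fun z _ => H_deriv z)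
        (h.continuous_cdfOf.intervalIntegrable _ _)
    _ ≤ H x := sub_le_self _ (H_nonneg y)

theorem integral_zero_cdfOf (h : IsPosDensity r) (k : ℝ → ℝ) (x : ℝ) :
    ∫ g in (0 : ℝ)..cdfOf r x, k g = ∫ y in Iic x, r y * k (cdfOf r y) := by
  rw [intervalIntegral.integral_of_le (h.cdfOf_mem_Ioo x).1.le, integral_Ioc_eq_integral_Ioo,
    ← h.image_cdfOf_Iio, integral_image_eq_integral_abs_deriv_smul measurableSet_Iio
      (fun y _ => (h.hasDerivAt_cdfOf y).hasDerivWithinAt) h.strictMono_cdfOf.injective.injOn,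
    integral_Iic_eq_integral_Iio]
  simp only [abs_of_pos (h.2.1 _), smul_eq_mul]

theorem intervalIntegrable_zero_cdfOf_iff (h : IsPosDensity r) {k : ℝ → ℝ} {x : ℝ} :
    IntervalIntegrable k volume 0 (cdfOf r x) ↔
      IntegrableOn (fun y => r y * k (cdfOf r y)) (Iic x) := by
  rw [intervalIntegrable_iff_integrableOn_Ioo_of_le (h.cdfOf_mem_Ioo x).1.le,
    ← h.image_cdfOf_Iio, integrableOn_image_iff_integrableOn_abs_deriv_smul measurableSet_Iio
      (fun y _ => (h.hasDerivAt_cdfOf y).hasDerivWithinAt) h.strictMono_cdfOf.injective.injOn,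
    integrableOn_Iic_iff_integrableOn_Iio]
  simp only [abs_of_pos (h.2.1 _), smul_eq_mul]

section Quantile

variable {G : ℝ → ℝ}

theorem quantile_cdfOf (h : IsPosDensity r) (hG : RightInvOn G (cdfOf r) (Ioo 0 1)) (x : ℝ) :
    G (cdfOf r x) = x :=
  h.strictMono_cdfOf.injective (hG (h.cdfOf_mem_Ioo x))

theorem integral_Iic_quantile (h : IsPosDensity r) (hG : RightInvOn G (cdfOf r) (Ioo 0 1))
    {f : ℝ} (hf : f ∈ Ioo 0 1) : ∫ y in Iic (G f), y * r y = ∫ g in (0 : ℝ)..f, G g := by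
  have change_var := h.integral_zero_cdfOf G (G f)
  simp only [hG hf, h.quantile_cdfOf hG] at change_var
  simp only [change_var, mul_comm]

theorem intervalIntegrable_quantile (h : IsPosDensity r)
    (hG : RightInvOn G (cdfOf r) (Ioo 0 1)) {f : ℝ} (hf : f ∈ Ioo 0 1) :
    IntervalIntegrable G volume 0 f := by
  rw [← hG hf, h.intervalIntegrable_zero_cdfOf_iff]
  simpa only [h.quantile_cdfOf hG, mul_comm] using h.integrable_id_mul_s6.integrableOn

-- `1 / r (G g)` blows up as `g → 0`: there only `Q g = O(g)` and the finite first moment make the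
-- integral in `hp` converge.
theorem hasDerivAt_of_comp_quantile_eq (h : IsPosDensity r)
    (hG : RightInvOn G (cdfOf r) (Ioo 0 1)) {p Q : ℝ → ℝ} {M : ℝ}
    (hQ : ContinuousOn Q (Ioo 0 1)) (hM : ∀ g ∈ Ioo (0 : ℝ) 1, |Q g| ≤ M * g)
    (hp : ∀ f ∈ Ioo (0 : ℝ) 1, p (G f) = -∫ g in (0 : ℝ)..f, 1 / r (G g) * Q g) (x : ℝ) :
    HasDerivAt p (-Q (cdfOf r x)) x := by
  have Q_cdf_cont : Continuous fun y => Q (cdfOf r y) :=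
    hQ.comp_continuous h.continuous_cdfOf h.cdfOf_mem_Ioo
  have Q_cdf_int (y : ℝ) : IntegrableOn (fun z => Q (cdfOf r z)) (Iic y) :=
    ((h.integrableOn_cdfOf_Iic y).const_mul M).mono' Q_cdf_cont.aestronglyMeasurable
      (.of_forall fun z => hM _ (h.cdfOf_mem_Ioo z))
  have p_eq : p = fun y => -∫ z in Iic y, Q (cdfOf r z) := by
    funext y
    have cancel (z : ℝ) : r z * (1 / r z * Q (cdfOf r z)) = Q (cdfOf r z) := by
      have := (h.2.1 z).ne'
      field_simp
    have p_quantile := hp _ (h.cdfOf_mem_Ioo y)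
    simpa only [h.integral_zero_cdfOf, h.quantile_cdfOf hG, cancel] using p_quantile
  exact p_eq ▸ (hasDerivAt_integral_Iic Q_cdf_cont Q_cdf_int x).neg

end Quantile

end IsPosDensity

/-! ### Calculus of functions of two variables -/

section TwoVariables

variable {E F : Type*} [NormedAddCommGroup E] [NormedSpace ℝ E] [NormedAddCommGroup F]
  [NormedSpace ℝ F]

theorem hasDerivAt_slice_left {f : ℝ → E → F} {x : ℝ} {t : E}
    (hf : DifferentiableAt ℝ ↿f (x, t)) :
    HasDerivAt (fun y => f y t) (fderiv ℝ ↿f (x, t) (1, 0)) x := by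
  have line_deriv : HasDerivAt (fun y => (y, t)) ((1 : ℝ), (0 : E)) x :=
    (hasDerivAt_id x).prodMk (hasDerivAt_const x t)
  exact hf.hasFDerivAt.comp_hasDerivAt x line_deriv

theorem contDiffOn_deriv_left {f : ℝ → E → F} {U : Set (ℝ × E)} {m n : WithTop ℕ∞}
    (hU : IsOpen U) (hf : ContDiffOn ℝ n ↿f U) (hmn : m + 1 ≤ n) :
    ContDiffOn ℝ m ↿(fun x t => deriv (fun y => f y t) x) U := by
  have differentiableAt {p : ℝ × E} (hp : p ∈ U) : DifferentiableAt ℝ ↿f p :=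
    ((hf.of_le hmn).differentiableOn (by simp)).differentiableAt (hU.mem_nhds hp)
  exact ((hf.fderiv_of_isOpen hU hmn).clm_apply (contDiffOn_const (c := ((1 : ℝ), (0 : E))))).congr
    fun p hp => (hasDerivAt_slice_left (differentiableAt hp)).deriv

theorem hasDerivAt_intervalIntegral_of_continuousOn {f f' : ℝ → ℝ → F} {a b : ℝ}
    (hf : ∀ x, ContinuousOn (f x) (uIcc a b)) (hf' : ContinuousOn ↿f' (univ ×ˢ uIcc a b))
    (hderiv : ∀ x, ∀ t ∈ uIcc a b, HasDerivAt (fun y => f y t) (f' x t) x) (x : ℝ) :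
    HasDerivAt (fun y => ∫ t in a..b, f y t) (∫ t in a..b, f' x t) x := by
  obtain ⟨B, hB⟩ := (isCompact_Icc.prod isCompact_uIcc).exists_bound_of_continuousOn
    (hf'.mono (prod_mono_left (subset_univ (Icc (x - 1) (x + 1)))))
  have aesm {k : ℝ → F} (hk : ContinuousOn k (uIcc a b)) :
      AEStronglyMeasurable k (volume.restrict (uIoc a b)) :=
    (hk.mono uIoc_subset_uIcc).aestronglyMeasurable measurableSet_uIoc
  exact (intervalIntegral.hasDerivAt_integral_of_dominated_loc_of_deriv_le
    (Icc_mem_nhds (sub_one_lt x) (lt_add_one x)) (.of_forall fun y => aesm (hf y))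
    (hf x).intervalIntegrable (aesm (hf'.uncurry_left x (mem_univ x)))
    (.of_forall fun t ht y hy => hB (y, t) ⟨hy, uIoc_subset_uIcc ht⟩)
    intervalIntegrable_const
    (.of_forall fun t ht y _ => hderiv y t (uIoc_subset_uIcc ht))).2

theorem exists_norm_integral_le_mul {X : Type*} [TopologicalSpace X] {f : ℝ → X → F} {K : Set X}
    {c : ℝ} (hK : IsCompact K) (hf : ContinuousOn ↿f (Icc 0 c ×ˢ K)) :
    ∃ M, 0 ≤ M ∧ ∀ t ∈ K, ∀ g ∈ Icc 0 c, ‖∫ l in (0 : ℝ)..g, f l t‖ ≤ M * g := by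
  obtain ⟨M, hM⟩ := (isCompact_Icc.prod hK).exists_bound_of_continuousOn hf
  refine ⟨|M|, abs_nonneg M, fun t ht g hg => ?_⟩
  have norm_le := intervalIntegral.norm_integral_le_of_norm_le_const (a := 0) (b := g)
    (f := fun l => f l t) (C := |M|) fun l hl => ?_
  · rwa [sub_zero, abs_of_nonneg hg.1] at norm_le
  · rw [uIoc_of_le hg.1] at hl
    exact (hM (l, t) ⟨⟨hl.1.le, hl.2.trans hg.2⟩, ht⟩).trans (le_abs_self M)

end TwoVariables

theorem integrable_prod_of_integral_norm_le {α β : Type*} [MeasurableSpace α] [MeasurableSpace β]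
    {E : Type*} [NormedAddCommGroup E] {μ : Measure α} {ν : Measure β} [SFinite μ]
    [IsFiniteMeasure ν] {f : α × β → E} {M : ℝ}
    (hf : AEStronglyMeasurable f (μ.prod ν))
    (hint : ∀ᵐ y ∂ν, Integrable (fun x => f (x, y)) μ)
    (hM : ∀ᵐ y ∂ν, ∫ x, ‖f (x, y)‖ ∂μ ≤ M) : Integrable f (μ.prod ν) := by
  refine (integrable_prod_iff' hf).2 ⟨hint, (integrable_const M).mono'
    hf.norm.prod_swap.integral_prod_right' ?_⟩
  filter_upwards [hM] with y hy
  rwa [Real.norm_of_nonneg (integral_nonneg fun _ => norm_nonneg _)]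

theorem hasDerivAt_of_eventually_apply_eq {f f₁ f₂ : ℝ → ℝ → ℝ} {g : ℝ → ℝ} {t : ℝ}
    (df₁ : ∀ᶠ p in 𝓝 (t, g t), HasDerivAt (f · p.2) (f₁ p.1 p.2) p.1)
    (df₂ : ∀ᶠ p in 𝓝 (t, g t), HasDerivAt (f p.1 ·) (f₂ p.1 p.2) p.2)
    (cf₁ : ContinuousAt ↿f₁ (t, g t)) (cf₂ : ContinuousAt ↿f₂ (t, g t)) (hne : f₂ t (g t) ≠ 0)
    (hinj : ∀ᶠ s in 𝓝 t, Function.Injective (f s)) (hg : ∀ᶠ s in 𝓝 t, f s (g s) = f t (g t)) :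
    HasDerivAt g (-(f₁ t (g t) / f₂ t (g t))) t := by
  have continuousAt_toCLM {k : ℝ → ℝ → ℝ} (hk : ContinuousAt ↿k (t, g t)) :
      ContinuousAt ↿(fun x y => ContinuousLinearMap.toSpanSingleton ℝ (k x y)) (t, g t) :=
    (ContinuousLinearMap.toSpanSingletonCLE (𝕜 := ℝ) (E := ℝ)).continuous.continuousAt.comp hk
  let e := ContinuousLinearEquiv.unitsEquivAut ℝ (Units.mk0 _ hne)
  have he : ContinuousLinearMap.toSpanSingleton ℝ (f₂ t (g t)) = e := by ext; simp [e]
  have df₁' := df₁.mono fun p hp => hp.hasFDerivAt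
  have df₂' := df₂.mono fun p hp => hp.hasFDerivAt
  have g_deriv := (hasStrictFDerivAt_implicitFunctionOfBivariate df₁' df₂'
    (continuousAt_toCLM cf₁) (continuousAt_toCLM cf₂) ⟨e, he.symm⟩).hasFDerivAt.hasDerivAt
  have g_eq := eventually_apply_implicitFunctionOfBivariate df₁' df₂'
    (continuousAt_toCLM cf₁) (continuousAt_toCLM cf₂) ⟨e, he.symm⟩
  refine (g_deriv.congr_deriv ?_).congr_of_eventuallyEq ?_
  · simp [he, e, div_eq_mul_inv]
  · filter_upwards [hinj, hg, g_eq] with s s_inj hs hs'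
    exact s_inj (hs.trans hs'.symm)

/-! ### The continuity equation -/

theorem integrable_prod_mul_of_abs_le {ρ v : ℝ → ℝ → ℝ} {a b M : ℝ}
    (hdens : ∀ t ∈ Icc a b, IsPosDensity (fun x => ρ x t))
    (hw : ContinuousOn ↿(fun x t => ρ x t * v x t) (univ ×ˢ Icc a b))
    (hM : ∀ x, ∀ t ∈ Icc a b, |v x t| ≤ M) :
    Integrable ↿(fun x t => ρ x t * v x t) (volume.prod (volume.restrict (Ioc a b))) := by
  have slice (t : ℝ) (ht : t ∈ Icc a b) : Integrable (fun x => ρ x t * v x t) ∧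
      ∫ x, ‖ρ x t * v x t‖ ≤ M := by
    have flux_le (x : ℝ) : ‖ρ x t * v x t‖ ≤ M * ρ x t := by
      rw [norm_mul, mul_comm, Real.norm_of_nonneg ((hdens t ht).2.1 x).le]
      exact mul_le_mul_of_nonneg_right (hM x t ht) ((hdens t ht).2.1 x).le
    have slice_cont : Continuous fun x => ρ x t * v x t :=
      continuousOn_univ.1 (hw.uncurry_right (f := fun x t => ρ x t * v x t) t ht)
    have bound_int := (hdens t ht).integrable_s6.const_mul M
    refine ⟨bound_int.mono' slice_cont.aestronglyMeasurable (.of_forall flux_le), ?_⟩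
    calc ∫ x, ‖ρ x t * v x t‖ ≤ ∫ x, M * ρ x t :=
          integral_mono_of_nonneg (.of_forall fun _ => norm_nonneg _) bound_int
            (.of_forall flux_le)
      _ = M := by rw [integral_const_mul, (hdens t ht).2.2.1, mul_one]
  have slice_ae := ae_restrict_of_forall_mem (μ := volume) measurableSet_Ioc
    fun t ht => slice t (Ioc_subset_Icc_self ht)
  refine integrable_prod_of_integral_norm_le ?_ (slice_ae.mono fun _ => And.left)
    (slice_ae.mono fun _ => And.right)
  rw [← Measure.restrict_univ (μ := (volume : Measure ℝ)), Measure.prod_restrict]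
  exact (hw.mono (prod_mono_right Ioc_subset_Icc_self)).aestronglyMeasurable
    (MeasurableSet.univ.prod measurableSet_Ioc)

/-- The notion of a classical solution, over the times in `I`, of the continuity equation
`∂ₜρ = -∂ₓw` by positive densities `ρ(·, t)`. Decay of the flux `w` at infinity is encoded as
integrability of `w` over `ℝ × (a, b]`. -/
structure IsContinuityFlow (ρ w : ℝ → ℝ → ℝ) (I : Set ℝ) : Prop where
  isPosDensity : ∀ t ∈ I, IsPosDensity (fun x => ρ x t)
  continuousOn_density : ContinuousOn ↿ρ (univ ×ˢ I)
  contDiffOn_flux : ContDiffOn ℝ 1 ↿w (univ ×ˢ I)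
  hasDerivAt_density : ∀ x, ∀ t ∈ I, HasDerivAt (ρ x) (-deriv (fun y => w y t) x) t
  integrable_flux : ∀ a b, Icc a b ⊆ I →
    Integrable ↿w (volume.prod (volume.restrict (Ioc a b)))

namespace IsContinuityFlow

variable {ρ v w G : ℝ → ℝ → ℝ} {I : Set ℝ} {a b t : ℝ}

theorem of_velocity (hI : IsOpen I) (hdens : ∀ t ∈ I, IsPosDensity (fun x => ρ x t))
    (hρ : ContDiffOn ℝ 1 ↿ρ (univ ×ˢ I)) (hv : ContDiffOn ℝ 1 ↿v (univ ×ˢ I))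
    (hpde : ∀ x, ∀ t ∈ I, deriv (ρ x) t = -deriv (fun y => ρ y t * v y t) x)
    (hbdd : ∀ a b, Icc a b ⊆ I → ∃ M, ∀ x, ∀ t ∈ Icc a b, |v x t| ≤ M) :
    IsContinuityFlow ρ (fun x t => ρ x t * v x t) I where
  isPosDensity := hdens
  continuousOn_density := hρ.continuousOn
  contDiffOn_flux := hρ.mul hv
  hasDerivAt_density x t ht := by
    have density_diff : DifferentiableAt ℝ ↿ρ (x, t) :=
      (hρ.differentiableOn one_ne_zero).differentiableAt
        ((isOpen_univ.prod hI).mem_nhds ⟨mem_univ x, ht⟩)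
    rw [← hpde x t ht]
    exact (density_diff.comp t (f := fun s => (x, s)) (by fun_prop)).hasDerivAt
  integrable_flux a b hsub := by
    obtain ⟨M, hM⟩ := hbdd a b hsub
    exact integrable_prod_mul_of_abs_le (fun t ht => hdens t (hsub ht))
      ((hρ.mul hv).continuousOn.mono (prod_mono_right hsub)) hM

theorem hasDerivAt_integral_flux (h : IsContinuityFlow ρ w I) (hI : IsOpen I) (hab : a ≤ b)
    (hsub : Icc a b ⊆ I) (x : ℝ) :
    HasDerivAt (fun y => ∫ τ in a..b, w y τ) (ρ x a - ρ x b) x := by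
  have hsub' : uIcc a b ⊆ I := uIcc_of_le hab ▸ hsub
  let w' (y τ : ℝ) : ℝ := deriv (fun z => w z τ) y
  have flux_deriv_cont : ContinuousOn ↿w' (univ ×ˢ uIcc a b) :=
    (contDiffOn_deriv_left (m := 0) (isOpen_univ.prod hI) h.contDiffOn_flux
      le_rfl).continuousOn.mono (prod_mono_right hsub')
  have integral_deriv : ∫ τ in a..b, -w' x τ = ρ x b - ρ x a :=
    intervalIntegral.integral_eq_sub_of_hasDerivAt
      (fun τ hτ => h.hasDerivAt_density x τ (hsub' hτ))
      (flux_deriv_cont.uncurry_left x (mem_univ x)).fun_neg.intervalIntegrable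
  rw [intervalIntegral.integral_neg, neg_eq_iff_eq_neg, neg_sub] at integral_deriv
  rw [← integral_deriv]
  refine hasDerivAt_intervalIntegral_of_continuousOn
    (fun y => (h.contDiffOn_flux.continuousOn.uncurry_left y (mem_univ y)).mono hsub')
    flux_deriv_cont (fun y τ hτ => ?_) x
  exact (hasDerivAt_slice_left ((h.contDiffOn_flux.differentiableOn one_ne_zero).differentiableAt
    ((isOpen_univ.prod hI).mem_nhds ⟨mem_univ y, hsub' hτ⟩))).differentiableAt.hasDerivAt

theorem cdfOf_eq_sub_integral_flux (h : IsContinuityFlow ρ w I) (hI : IsOpen I) (hab : a ≤ b)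
    (hsub : Icc a b ⊆ I) (x : ℝ) :
    cdfOf (fun y => ρ y b) x = cdfOf (fun y => ρ y a) x - ∫ τ in a..b, w x τ := by
  have ha := h.isPosDensity a (hsub (left_mem_Icc.2 hab))
  have hb := h.isPosDensity b (hsub (right_mem_Icc.2 hab))
  -- The defect `K` is constant in space, and integrable near `-∞` since the cdfs and `w` are.
  let K (y : ℝ) : ℝ := cdfOf (fun y => ρ y b) y - cdfOf (fun y => ρ y a) y + ∫ τ in a..b, w y τ
  have K_deriv (y : ℝ) : HasDerivAt K 0 y :=
    (((hb.hasDerivAt_cdfOf y).fun_sub (ha.hasDerivAt_cdfOf y)).fun_add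
      (h.hasDerivAt_integral_flux hI hab hsub y)).congr_deriv (by ring)
  have K_const (y : ℝ) : K y = K x :=
    is_const_of_deriv_eq_zero (fun y => (K_deriv y).differentiableAt)
      (fun y => (K_deriv y).deriv) y x
  have K_int : IntegrableOn K (Iic x) := by
    have flux_int : Integrable fun y => ∫ τ in a..b, w y τ := by
      simp only [intervalIntegral.integral_of_le hab]
      exact (h.integrable_flux a b hsub).integral_prod_left
    exact ((hb.integrableOn_cdfOf_Iic x).sub (ha.integrableOn_cdfOf_Iic x)).add
      flux_int.integrableOn
  have K_zero : K x = 0 := by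
    rw [funext K_const, integrableOn_const_iff] at K_int
    simpa using K_int
  simp only [K] at K_zero
  linarith only [K_zero]

theorem hasDerivAt_cdfOf (h : IsContinuityFlow ρ w I) (hI : IsOpen I) (ht : t ∈ I) (x : ℝ) :
    HasDerivAt (fun s => cdfOf (fun y => ρ y s) x) (-w x t) t := by
  obtain ⟨a, b, hab, hmem, hsub⟩ := exists_Icc_mem_subset_of_mem_nhds (hI.mem_nhds ht)
  have flux_cont : ContinuousOn (w x) I :=
    h.contDiffOn_flux.continuousOn.uncurry_left x (mem_univ x)
  have integral_deriv : HasDerivAt (fun s => ∫ τ in a..s, w x τ) (w x t) t :=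
    intervalIntegral.integral_hasDerivAt_right
      ((flux_cont.mono ((Icc_subset_Icc_right hab.2).trans hsub)).intervalIntegrable_of_Icc hab.1)
      (flux_cont.stronglyMeasurableAtFilter hI t ht) (flux_cont.continuousAt (hI.mem_nhds ht))
  refine (integral_deriv.const_sub (cdfOf (fun y => ρ y a) x)).congr_of_eventuallyEq ?_
  filter_upwards [hmem] with s hs
  exact h.cdfOf_eq_sub_integral_flux hI hs.1 ((Icc_subset_Icc_right hs.2).trans hsub) x

theorem hasDerivAt_quantile (h : IsContinuityFlow ρ w I) (hI : IsOpen I)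
    (hG : ∀ t ∈ I, RightInvOn (G t) (cdfOf (fun x => ρ x t)) (Ioo 0 1)) (ht : t ∈ I) {g : ℝ}
    (hg : g ∈ Ioo 0 1) : HasDerivAt (fun s => G s g) (w (G t g) t / ρ (G t g) t) t := by
  have mem_I : ∀ᶠ s in 𝓝 t, s ∈ I := hI.mem_nhds ht
  have fst_mem_I (x : ℝ) : ∀ᶠ p : ℝ × ℝ in 𝓝 (t, x), p.1 ∈ I :=
    continuous_fst.continuousAt.eventually mem_I
  have swap_cont {k : ℝ → ℝ → ℝ} (hk : ContinuousOn ↿k (univ ×ˢ I)) (x : ℝ) :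
      ContinuousAt ↿(fun s y => k y s) (t, x) :=
    (hk.continuousAt ((isOpen_univ.prod hI).mem_nhds ⟨mem_univ x, ht⟩)).comp
      (f := Prod.swap) continuous_swap.continuousAt
  refine (hasDerivAt_of_eventually_apply_eq (f := fun s => cdfOf (fun x => ρ x s))
    (f₁ := fun s x => -w x s) (f₂ := fun s x => ρ x s)
    ?_ ?_ (swap_cont h.contDiffOn_flux.continuousOn _).neg (swap_cont h.continuousOn_density _)
    ((h.isPosDensity t ht).2.1 _).ne' ?_ ?_).congr_deriv ?_
  · filter_upwards [fst_mem_I (G t g)] with p hp using h.hasDerivAt_cdfOf hI hp p.2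
  · filter_upwards [fst_mem_I (G t g)] with p hp using (h.isPosDensity _ hp).hasDerivAt_cdfOf p.2
  · filter_upwards [mem_I] with s hs using (h.isPosDensity s hs).strictMono_cdfOf.injective
  · filter_upwards [mem_I] with s hs using (hG s hs hg).trans (hG t ht hg).symm
  · rw [neg_div, neg_neg]

end IsContinuityFlow

/-! ### Evolution of the Lorenz curve -/

theorem hasDerivAt_integral_Iic_quantile {ρ G V : ℝ → ℝ → ℝ} {S : Set ℝ} {t f M : ℝ}
    (hS : S ∈ 𝓝 t) (hdens : ∀ s ∈ S, IsPosDensity (fun x => ρ x s))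
    (hG : ∀ s ∈ S, RightInvOn (G s) (cdfOf (fun x => ρ x s)) (Ioo 0 1))
    (hV : ∀ s ∈ S, ∀ g ∈ Ioo 0 1, HasDerivAt (fun u => G u g) (V s g) s)
    (hV_cont : ContinuousOn (V t) (Ioo 0 1)) (hM : ∀ s ∈ S, ∀ g ∈ Ioo 0 1, |V s g| ≤ M)
    (hf : f ∈ Ioo 0 1) :
    HasDerivAt (fun s => ∫ y in Iic (G s f), y * ρ y s) (∫ g in (0 : ℝ)..f, V t g) t := by
  have hsub : uIoc 0 f ⊆ Ioo 0 1 := by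
    rw [uIoc_of_le hf.1.le]
    exact Ioc_subset_Ioo_right hf.2
  have quantile_int (s : ℝ) (hs : s ∈ S) : IntervalIntegrable (G s) volume 0 f :=
    (hdens s hs).intervalIntegrable_quantile (hG s hs) hf
  have integral_deriv :
      HasDerivAt (fun s => ∫ g in (0 : ℝ)..f, G s g) (∫ g in (0 : ℝ)..f, V t g) t :=
    (intervalIntegral.hasDerivAt_integral_of_dominated_loc_of_deriv_le (bound := fun _ => M) hS
      (eventually_of_mem hS fun s hs => (quantile_int s hs).def'.aestronglyMeasurable)
      (quantile_int t (mem_of_mem_nhds hS))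
      ((hV_cont.mono hsub).aestronglyMeasurable measurableSet_uIoc)
      (.of_forall fun g hg s hs => hM s hs g (hsub hg)) intervalIntegrable_const
      (.of_forall fun g hg s hs => hV s hs g (hsub hg))).2
  refine integral_deriv.congr_of_eventuallyEq ?_
  filter_upwards [hS] with s hs using (hdens s hs).integral_Iic_quantile (hG s hs) hf

theorem hasDerivAt_integral_Iic_quantile_of_velocity {ρ v G Q : ℝ → ℝ → ℝ} {I : Set ℝ}
    (hI : IsOpen I) (hdens : ∀ t ∈ I, IsPosDensity (fun x => ρ x t))
    (hG : ∀ t ∈ I, RightInvOn (G t) (cdfOf (fun x => ρ x t)) (Ioo 0 1))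
    (hρ : ContDiffOn ℝ 1 ↿ρ (univ ×ˢ I)) (hv : ContDiffOn ℝ 1 ↿v (univ ×ˢ I))
    (hpde : ∀ x, ∀ t ∈ I, deriv (ρ x) t = -deriv (fun y => ρ y t * v y t) x)
    (hvQ : ∀ t ∈ I, ∀ x, v x t = -Q t (cdfOf (fun y => ρ y t) x))
    (hQ : ∀ t ∈ I, ContinuousOn (Q t) (Ioo 0 1))
    (hbdd : ∀ a b, Icc a b ⊆ I → ∃ M, ∀ t ∈ Icc a b, ∀ g ∈ Ioo (0 : ℝ) 1, |Q t g| ≤ M)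
    {f t : ℝ} (hf : f ∈ Ioo 0 1) (ht : t ∈ I) :
    HasDerivAt (fun s => ∫ y in Iic (G s f), y * ρ y s) (-∫ g in (0 : ℝ)..f, Q t g) t := by
  have flow : IsContinuityFlow ρ (fun x t => ρ x t * v x t) I := by
    refine .of_velocity hI hdens hρ hv hpde fun a b hsub => ?_
    obtain ⟨M, hM⟩ := hbdd a b hsub
    refine ⟨M, fun x t ht => ?_⟩
    rw [hvQ t (hsub ht), abs_neg]
    exact hM t ht _ ((hdens t (hsub ht)).cdfOf_mem_Ioo x)
  have quantile_deriv (s : ℝ) (hs : s ∈ I) (g : ℝ) (hg : g ∈ Ioo 0 1) :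
      HasDerivAt (fun u => G u g) (-Q s g) s := by
    refine (flow.hasDerivAt_quantile hI hG hs hg).congr_deriv ?_
    rw [mul_div_cancel_left₀ _ ((hdens s hs).2.1 _).ne', hvQ s hs, hG s hs hg]
  obtain ⟨a, b, -, hmem, hsub⟩ := exists_Icc_mem_subset_of_mem_nhds (hI.mem_nhds ht)
  obtain ⟨M, hM⟩ := hbdd a b hsub
  rw [← intervalIntegral.integral_neg]
  exact hasDerivAt_integral_Iic_quantile hmem (fun s hs => hdens s (hsub hs))
    (fun s hs => hG s (hsub hs)) (fun s hs => quantile_deriv s (hsub hs)) (hQ t ht).neg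
    (fun s hs g hg => (abs_neg (Q s g)).trans_le (hM s hs g hg)) hf

theorem stmt6_general {ρ ψ G φ : ℝ → ℝ → ℝ} {I : Set ℝ} (hI : IsOpen I)
    (hρ : ContDiffOn ℝ 1 ↿ρ (univ ×ˢ I)) (hψ : ContDiffOn ℝ 2 ↿ψ (univ ×ˢ I))
    (hdens : ∀ t ∈ I, IsPosDensity (fun x => ρ x t))
    (hG : ∀ t ∈ I, RightInvOn (G t) (cdfOf (fun x => ρ x t)) (Ioo 0 1))
    (hφ : ContinuousOn ↿φ (Icc 0 1 ×ˢ I))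
    (hrel : ∀ t ∈ I, ∀ f ∈ Ioo (0 : ℝ) 1,
      ψ (G t f) t = -∫ g in (0 : ℝ)..f, 1 / ρ (G t g) t * ∫ l in (0 : ℝ)..g, φ l t)
    (hpde : ∀ x, ∀ t ∈ I,
      deriv (ρ x) t = -deriv (fun y => ρ y t * deriv (fun z => ψ z t) y) x)
    {f t : ℝ} (hf : f ∈ Ioo 0 1) (ht : t ∈ I) :
    HasDerivAt (fun s => ∫ y in Iic (G s f), y * ρ y s)
      (-∫ g in (0 : ℝ)..f, ∫ l in (0 : ℝ)..g, φ l t) t := by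
  let Q (t g : ℝ) : ℝ := ∫ l in (0 : ℝ)..g, φ l t
  have Q_cont (t : ℝ) (ht : t ∈ I) : ContinuousOn (Q t) (Ioo 0 1) := by
    have slice_int : IntegrableOn (fun l => φ l t) (uIcc 0 1) :=
      uIcc_of_le (zero_le_one' ℝ) ▸ (hφ.uncurry_right t ht).integrableOn_Icc
    exact (intervalIntegral.continuousOn_primitive_interval slice_int).mono
      (Ioo_subset_Icc_self.trans Icc_subset_uIcc)
  have Q_bound {K : Set ℝ} (hK : IsCompact K) (hsub : K ⊆ I) :
      ∃ M, 0 ≤ M ∧ ∀ t ∈ K, ∀ g ∈ Icc 0 1, |Q t g| ≤ M * g :=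
    exists_norm_integral_le_mul hK (hφ.mono (prod_mono_right hsub))
  have velocity (t : ℝ) (ht : t ∈ I) (x : ℝ) :
      deriv (fun y => ψ y t) x = -Q t (cdfOf (fun y => ρ y t) x) := by
    obtain ⟨M, -, hM⟩ := Q_bound isCompact_singleton (singleton_subset_iff.2 ht)
    exact ((hdens t ht).hasDerivAt_of_comp_quantile_eq (hG t ht) (Q_cont t ht)
      (fun g hg => hM t rfl g (Ioo_subset_Icc_self hg)) (hrel t ht) x).deriv
  refine hasDerivAt_integral_Iic_quantile_of_velocity hI hdens hG hρ
    (contDiffOn_deriv_left (isOpen_univ.prod hI) hψ one_add_one_eq_two.le) hpde velocity Q_cont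
    (fun a b hsub => ?_) hf ht
  obtain ⟨M, hM0, hM⟩ := Q_bound isCompact_Icc hsub
  exact ⟨M, fun t ht g hg =>
    (hM t ht g (Ioo_subset_Icc_self hg)).trans (mul_le_of_le_one_right hM0 hg.2.le)⟩

theorem stmt6 (T : ℝ) (hT : 0 < T) (ρ ψ : ℝ → ℝ → ℝ)
    (hρs : ContDiff ℝ (⊤ : ℕ∞) (fun p : ℝ × ℝ => ρ p.1 p.2))
    (hψs : ContDiff ℝ (⊤ : ℕ∞) (fun p : ℝ × ℝ => ψ p.1 p.2))
    (hdens : ∀ t ∈ Ioo 0 T, IsPosDensity (fun x => ρ x t))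
    (G : ℝ → ℝ → ℝ)
    (hG : ∀ t ∈ Ioo 0 T, ∀ f ∈ Ioo (0:ℝ) 1, cdfOf (fun x => ρ x t) (G t f) = f)
    (φ : ℝ → ℝ → ℝ)
    (hφ : ContinuousOn (fun p : ℝ × ℝ => φ p.1 p.2) (Icc 0 1 ×ˢ Ioo 0 T))
    (hrel : ∀ t ∈ Ioo 0 T, ∀ f ∈ Ioo (0:ℝ) 1,
      ψ (G t f) t = -∫ g in (0:ℝ)..f, (1 / ρ (G t g) t) * ∫ l in (0:ℝ)..g, φ l t)
    (hpde : ∀ x : ℝ, ∀ t ∈ Ioo 0 T,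
      deriv (fun s => ρ x s) t = -deriv (fun y => ρ y t * deriv (fun z => ψ z t) y) x)
    (hbc : ∀ t ∈ Ioo 0 T,
      Tendsto (fun x => ρ x t * deriv (fun z => ψ z t) x) atTop (nhds 0) ∧
      Tendsto (fun x => ρ x t * deriv (fun z => ψ z t) x) atBot (nhds 0))
    (hbcx : ∀ t ∈ Ioo 0 T,
      Tendsto (fun x => x * (ρ x t * deriv (fun z => ψ z t) x)) atTop (nhds 0) ∧
      Tendsto (fun x => x * (ρ x t * deriv (fun z => ψ z t) x)) atBot (nhds 0)) :
    ∀ f ∈ Ioo (0:ℝ) 1, ∀ t ∈ Ioo 0 T,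
      HasDerivAt (fun s => ∫ y in Iic (G s f), y * ρ y s)
        (-∫ g in (0:ℝ)..f, ∫ l in (0:ℝ)..g, φ l t) t :=
  fun _ hf _ ht => stmt6_general isOpen_Ioo (contDiff_infty.1 hρs 1).contDiffOn
    (contDiff_infty.1 hψs 2).contDiffOn hdens hG hφ hrel hpde hf ht
end

section
/- Let ρ be a positive probability density on ℝ with inverse cdf G and Lorenz curve ℒ (so ℒ′ = G and ℒ″ = 1/(ρ∘G) on (0,1)). Let V : ℝ → ℝ and W : ℝ × ℝ → ℝ be continuous with ρ·V∘id, (x,y) ↦ W(x,y)ρ(x)ρ(y), and ρ log ρ all integrable. Then: (i) ∫_ℝ ρ(x) V(x) dx = ∫_0^1 V(ℒ′(f)) df; (ii) ∫_ℝ ∫_ℝ W(x,y) ρ(x) ρ(y) dx dy = ∫_0^1 ∫_0^1 W(ℒ′(f), ℒ′(g)) df dg; (iii) ∫_ℝ ρ(x) log ρ(x) dx = − ∫_0^1 log ℒ″(f) df. Consequently the classical free energy F[ρ] = ∫ ρ V + (1/2) ∬ W ρ ρ + ∫ ρ log ρ equals F̃[ℒ] = ∫_0^1 V(ℒ′) df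 + (1/2) ∫_0^1∫_0^1 W(ℒ′(f),ℒ′(g)) df dg − ∫_0^1 log ℒ″ df. -/
open MeasureTheory Set Filter

/-!
The right inverse `G` of the cdf `C` transports the uniform law on `(0, 1)` to the law with density
`ρ`: by monotonicity of `C`, the set `{f | G f ≤ x}` lies between `(0, C x)` and `(0, C x]`, so it
has length `C x`. All three identities are then changes of variables along `G`: once for the
potential, twice for the interaction, and once with integrand `log ρ = -log (1 / ρ)` for the
entropy.
-/

open ProbabilityTheory

section Density

variable {α E : Type*} [MeasurableSpace α] [NormedAddCommGroup E] [NormedSpace ℝ E]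
  {μ : Measure α} {ρ : α → ℝ}

lemma integral_withDensity_ofReal (hρ : AEMeasurable ρ μ) (hρ₀ : 0 ≤ᵐ[μ] ρ) (g : α → E) :
    ∫ x, g x ∂μ.withDensity (fun x ↦ ENNReal.ofReal (ρ x)) = ∫ x, ρ x • g x ∂μ := by
  rw [integral_withDensity_eq_integral_toReal_smul₀ hρ.ennreal_ofReal (by simp)]
  refine integral_congr_ae ?_
  filter_upwards [hρ₀] with x hx
  rw [ENNReal.toReal_ofReal hx]

lemma integrable_withDensity_ofReal_iff (hρ : AEMeasurable ρ μ) (hρ₀ : 0 ≤ᵐ[μ] ρ) {g : α → E} :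
    Integrable g (μ.withDensity fun x ↦ ENNReal.ofReal (ρ x)) ↔
      Integrable (fun x ↦ ρ x • g x) μ := by
  rw [integrable_withDensity_iff_integrable_smul₀' hρ.ennreal_ofReal (by simp)]
  refine integrable_congr ?_
  filter_upwards [hρ₀] with x hx
  rw [ENNReal.toReal_ofReal hx]

lemma measureReal_withDensity_ofReal (hρ : AEMeasurable ρ μ) (hρ₀ : 0 ≤ᵐ[μ] ρ) {s : Set α}
    (hs : MeasurableSet s) :
    (μ.withDensity fun x ↦ ENNReal.ofReal (ρ x)).real s = ∫ x in s, ρ x ∂μ := by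
  rw [measureReal_def, withDensity_apply _ hs, integral_eq_lintegral_of_nonneg_ae
    (ae_restrict_of_ae hρ₀) hρ.aestronglyMeasurable.restrict]

lemma isProbabilityMeasure_withDensity_ofReal (hρ₀ : 0 ≤ᵐ[μ] ρ) (hρ₁ : ∫ x, ρ x ∂μ = 1) :
    IsProbabilityMeasure (μ.withDensity fun x ↦ ENNReal.ofReal (ρ x)) := by
  have hρ : Integrable ρ μ := .of_integral_ne_zero (by simp [hρ₁])
  rw [isProbabilityMeasure_iff_real, measureReal_withDensity_ofReal hρ.aemeasurable hρ₀ .univ,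
    setIntegral_univ, hρ₁]

lemma prod_withDensity_ofReal {β : Type*} [MeasurableSpace β] {ν : Measure β} [SFinite μ]
    [SFinite ν] {σ : β → ℝ} (hρ : AEMeasurable ρ μ) (hσ : AEMeasurable σ ν) (hρ₀ : 0 ≤ᵐ[μ] ρ) :
    (μ.withDensity fun x ↦ ENNReal.ofReal (ρ x)).prod
        (ν.withDensity fun y ↦ ENNReal.ofReal (σ y)) =
      (μ.prod ν).withDensity fun p ↦ ENNReal.ofReal (ρ p.1 * σ p.2) := by
  rw [prod_withDensity₀ hρ.ennreal_ofReal hσ.ennreal_ofReal]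
  refine withDensity_congr_ae ?_
  filter_upwards [Measure.quasiMeasurePreserving_fst.ae hρ₀] with p hp
  rw [ENNReal.ofReal_mul hp]

end Density

lemma integral_integral_comp_of_hasLaw {Ω Ω' α β E : Type*} [MeasurableSpace Ω]
    [MeasurableSpace Ω'] [MeasurableSpace α] [MeasurableSpace β] [NormedAddCommGroup E]
    [NormedSpace ℝ E] {P : Measure Ω} {Q : Measure Ω'} {μ : Measure α} {ν : Measure β} [SFinite ν]
    {X : Ω → α} {Y : Ω' → β} (hX : HasLaw X μ P) (hY : HasLaw Y ν Q) {f : α → β → E}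
    (hf : AEStronglyMeasurable (fun p : α × β ↦ f p.1 p.2) (μ.prod ν)) :
    ∫ ω, ∫ ω', f (X ω) (Y ω') ∂Q ∂P = ∫ x, ∫ y, f x y ∂ν ∂μ := by
  have h_section : ∀ᵐ ω ∂P, AEStronglyMeasurable (f (X ω)) ν :=
    ae_of_ae_map hX.aemeasurable (hX.map_eq.symm ▸ hf.prodMk_left)
  calc
    ∫ ω, ∫ ω', f (X ω) (Y ω') ∂Q ∂P = ∫ ω, ∫ y, f (X ω) y ∂ν ∂P :=
      integral_congr_ae (h_section.mono fun _ h ↦ hY.integral_comp h)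
    _ = ∫ x, ∫ y, f x y ∂ν ∂μ := hX.integral_comp hf.integral_prod_right'

section Quantile

variable {μ : Measure ℝ} {G : ℝ → ℝ}

lemma strictMonoOn_of_rightInvOn_cdf (hG : RightInvOn G (cdf μ) (Ioo 0 1)) :
    StrictMonoOn G (Ioo 0 1) := fun f hf g hg hfg ↦
  (monotone_cdf μ).reflect_lt (by rwa [hG hf, hG hg])

lemma preimage_Iic_inter_ae_eq_of_rightInvOn_cdf (hG : RightInvOn G (cdf μ) (Ioo 0 1)) (x : ℝ) :
    (G ⁻¹' Iic x ∩ Ioo 0 1 : Set ℝ) =ᵐ[volume] Ioo 0 (cdf μ x) := by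
  filter_upwards [Measure.ae_ne volume (cdf μ x)] with f hf
  refine propext ⟨fun ⟨hGf, hf₀₁⟩ ↦ ⟨hf₀₁.1, ?_⟩, fun ⟨hf₀, hfx⟩ ↦ ?_⟩
  · exact (hG hf₀₁ ▸ monotone_cdf μ hGf).lt_of_ne hf
  · have hf₀₁ : f ∈ Ioo 0 1 := ⟨hf₀, hfx.trans_le (cdf_le_one μ x)⟩
    exact ⟨((monotone_cdf μ).reflect_lt ((hG hf₀₁).trans_lt hfx)).le, hf₀₁⟩

theorem hasLaw_of_rightInvOn_cdf [IsProbabilityMeasure μ]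
    (hG : RightInvOn G (cdf μ) (Ioo 0 1)) : HasLaw G μ (volume.restrict (Ioo 0 1)) := by
  have hG_meas : AEMeasurable G (volume.restrict (Ioo 0 1)) :=
    aemeasurable_restrict_of_monotoneOn measurableSet_Ioo
      (strictMonoOn_of_rightInvOn_cdf hG).monotoneOn
  refine ⟨hG_meas, Measure.ext_of_Iic _ _ fun x ↦ ?_⟩
  rw [Measure.map_apply_of_aemeasurable hG_meas measurableSet_Iic,
    Measure.restrict_apply' measurableSet_Ioo,
    measure_congr (preimage_Iic_inter_ae_eq_of_rightInvOn_cdf hG x), Real.volume_Ioo, sub_zero,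
    ofReal_cdf]

end Quantile

section QuantileOfDensity

variable {E : Type*} [NormedAddCommGroup E] [NormedSpace ℝ E] {ρ G : ℝ → ℝ}

lemma cdf_withDensity_ofReal (hρ₀ : 0 ≤ᵐ[volume] ρ) (hρ₁ : ∫ x, ρ x = 1) :
    ⇑(cdf (volume.withDensity fun x ↦ ENNReal.ofReal (ρ x))) = cdfOf ρ := by
  have hρ : Integrable ρ := .of_integral_ne_zero (by simp [hρ₁])
  have := isProbabilityMeasure_withDensity_ofReal hρ₀ hρ₁
  ext x
  rw [cdf_eq_real, measureReal_withDensity_ofReal hρ.aemeasurable hρ₀ measurableSet_Iic, cdfOf]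

lemma hasLaw_withDensity_of_rightInvOn_cdfOf (hρ₀ : 0 ≤ᵐ[volume] ρ) (hρ₁ : ∫ x, ρ x = 1)
    (hG : RightInvOn G (cdfOf ρ) (Ioo 0 1)) :
    HasLaw G (volume.withDensity fun x ↦ ENNReal.ofReal (ρ x)) (volume.restrict (Ioc 0 1)) := by
  have := isProbabilityMeasure_withDensity_ofReal hρ₀ hρ₁
  rw [← restrict_Ioo_eq_restrict_Ioc]
  exact hasLaw_of_rightInvOn_cdf (by rwa [cdf_withDensity_ofReal hρ₀ hρ₁])

theorem integral_smul_eq_integral_comp_quantile (hρ₀ : 0 ≤ᵐ[volume] ρ) (hρ₁ : ∫ x, ρ x = 1)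
    (hG : RightInvOn G (cdfOf ρ) (Ioo 0 1)) {V : ℝ → E} (hV : Integrable fun x ↦ ρ x • V x) :
    ∫ x, ρ x • V x = ∫ f in (0 : ℝ)..1, V (G f) := by
  have hρ : Integrable ρ := .of_integral_ne_zero (by simp [hρ₁])
  have hV_law := (integrable_withDensity_ofReal_iff hρ.aemeasurable hρ₀).2 hV
  rw [intervalIntegral.integral_of_le zero_le_one,
    ← integral_withDensity_ofReal hρ.aemeasurable hρ₀]
  exact ((hasLaw_withDensity_of_rightInvOn_cdfOf hρ₀ hρ₁ hG).integral_comp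
    hV_law.aestronglyMeasurable).symm

theorem integral_integral_smul_eq_integral_integral_comp_quantile
    (hρ₀ : 0 ≤ᵐ[volume] ρ) (hρ₁ : ∫ x, ρ x = 1)
    (hG : RightInvOn G (cdfOf ρ) (Ioo 0 1)) {W : ℝ → ℝ → E}
    (hW : Integrable fun p : ℝ × ℝ ↦ (ρ p.1 * ρ p.2) • W p.1 p.2) :
    ∫ x, ∫ y, (ρ x * ρ y) • W x y = ∫ f in (0 : ℝ)..1, ∫ g in (0 : ℝ)..1, W (G f) (G g) := by
  have hρ : AEMeasurable ρ := (Integrable.of_integral_ne_zero (by simp [hρ₁])).aemeasurable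
  have hρρ₀ : 0 ≤ᵐ[volume] fun p : ℝ × ℝ ↦ ρ p.1 * ρ p.2 := by
    filter_upwards [Measure.quasiMeasurePreserving_fst.ae hρ₀,
      Measure.quasiMeasurePreserving_snd.ae hρ₀] with p h₁ h₂ using mul_nonneg h₁ h₂
  have hW_law := (integrable_withDensity_ofReal_iff (ρ := fun p : ℝ × ℝ ↦ ρ p.1 * ρ p.2)
    (hρ.comp_fst.mul hρ.comp_snd) hρρ₀).2 hW
  rw [← prod_withDensity_ofReal hρ hρ hρ₀] at hW_law
  have hG_law := hasLaw_withDensity_of_rightInvOn_cdfOf hρ₀ hρ₁ hG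
  simp only [intervalIntegral.integral_of_le zero_le_one]
  rw [integral_integral_comp_of_hasLaw hG_law hG_law hW_law.aestronglyMeasurable]
  simp only [integral_withDensity_ofReal hρ hρ₀, mul_smul, integral_smul]

theorem integral_mul_log_eq_neg_integral_log_one_div_comp_quantile (hρ₀ : 0 ≤ᵐ[volume] ρ)
    (hρ₁ : ∫ x, ρ x = 1) (hG : RightInvOn G (cdfOf ρ) (Ioo 0 1))
    (hS : Integrable fun x ↦ ρ x * Real.log (ρ x)) :
    ∫ x, ρ x * Real.log (ρ x) = -∫ f in (0 : ℝ)..1, Real.log (1 / ρ (G f)) := by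
  simp only [one_div, Real.log_inv, intervalIntegral.integral_neg, neg_neg]
  exact integral_smul_eq_integral_comp_quantile hρ₀ hρ₁ hG hS

end QuantileOfDensity

theorem stmt7_general (ρ : ℝ → ℝ) (hρ₀ : 0 ≤ᵐ[volume] ρ) (hρ₁ : (∫ x, ρ x) = 1)
    (G : ℝ → ℝ) (hG : RightInvOn G (cdfOf ρ) (Ioo 0 1))
    (V : ℝ → ℝ) (W : ℝ → ℝ → ℝ)
    (hVi : Integrable (fun x ↦ ρ x * V x))
    (hWi : Integrable (fun p : ℝ × ℝ ↦ W p.1 p.2 * ρ p.1 * ρ p.2))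
    (hSi : Integrable (fun x ↦ ρ x * Real.log (ρ x))) :
    (∫ x, ρ x * V x) = (∫ f in (0:ℝ)..1, V (G f)) ∧
    (∫ x, ∫ y, W x y * ρ x * ρ y)
      = (∫ f in (0:ℝ)..1, ∫ g in (0:ℝ)..1, W (G f) (G g)) ∧
    (∫ x, ρ x * Real.log (ρ x)) = -(∫ f in (0:ℝ)..1, Real.log (1 / ρ (G f))) ∧
    (∫ x, ρ x * V x) + (1/2) * (∫ x, ∫ y, W x y * ρ x * ρ y)
        + (∫ x, ρ x * Real.log (ρ x))
      = (∫ f in (0:ℝ)..1, V (G f))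
        + (1/2) * (∫ f in (0:ℝ)..1, ∫ g in (0:ℝ)..1, W (G f) (G g))
        - (∫ f in (0:ℝ)..1, Real.log (1 / ρ (G f))) := by
  have h_potential : ∫ x, ρ x * V x = ∫ f in (0 : ℝ)..1, V (G f) :=
    integral_smul_eq_integral_comp_quantile hρ₀ hρ₁ hG hVi
  have hW_comm (x y : ℝ) : W x y * ρ x * ρ y = (ρ x * ρ y) • W x y := by
    rw [smul_eq_mul]; ring
  simp only [hW_comm] at hWi ⊢
  have h_interaction :=
    integral_integral_smul_eq_integral_integral_comp_quantile hρ₀ hρ₁ hG hWi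
  have h_entropy := integral_mul_log_eq_neg_integral_log_one_div_comp_quantile hρ₀ hρ₁ hG hSi
  refine ⟨h_potential, h_interaction, h_entropy, ?_⟩
  rw [h_potential, h_interaction, h_entropy, sub_eq_add_neg]

/- Here `G = ℒ′` is the inverse cdf and `fun f => 1 / ρ (G f) = ℒ″` the
second derivative of the Lorenz curve, per the paper's identities. -/
theorem stmt7 (ρ : ℝ → ℝ) (hρ : IsPosDensity ρ)
    (G : ℝ → ℝ) (hG : ∀ f ∈ Ioo (0:ℝ) 1, cdfOf ρ (G f) = f)
    (V : ℝ → ℝ) (hV : Continuous V)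
    (W : ℝ → ℝ → ℝ) (hW : Continuous (fun p : ℝ × ℝ => W p.1 p.2))
    (hVi : MeasureTheory.Integrable (fun x => ρ x * V x))
    (hWi : MeasureTheory.Integrable (fun p : ℝ × ℝ => W p.1 p.2 * ρ p.1 * ρ p.2))
    (hSi : MeasureTheory.Integrable (fun x => ρ x * Real.log (ρ x))) :
    (∫ x, ρ x * V x) = (∫ f in (0:ℝ)..1, V (G f)) ∧
    (∫ x, ∫ y, W x y * ρ x * ρ y)
      = (∫ f in (0:ℝ)..1, ∫ g in (0:ℝ)..1, W (G f) (G g)) ∧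
    (∫ x, ρ x * Real.log (ρ x)) = -(∫ f in (0:ℝ)..1, Real.log (1 / ρ (G f))) ∧
    (∫ x, ρ x * V x) + (1/2) * (∫ x, ∫ y, W x y * ρ x * ρ y)
        + (∫ x, ρ x * Real.log (ρ x))
      = (∫ f in (0:ℝ)..1, V (G f))
        + (1/2) * (∫ f in (0:ℝ)..1, ∫ g in (0:ℝ)..1, W (G f) (G g))
        - (∫ f in (0:ℝ)..1, Real.log (1 / ρ (G f))) := by
  obtain ⟨-, hpos, hmass, -⟩ := hρ
  exact stmt7_general ρ (.of_forall fun x ↦ (hpos x).le) hmass G hG V W hVi hWi hSi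
end
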